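/- arXiv:2204.01291 — 10 statements merged into one kernel-verified Lean document; each statement's English description precedes it below -/
import Mathlib

section
/- Let H be a real Hilbert space. The topology τ_g on H, defined as the coarsest topology containing every elementary set U_x(y) for x ≠ y, is equal to the weak topology on H. -/
/-!
A point `z` lies in `elemSet x y` exactly when `0 < ⟪z - y, x - y⟫`: moving from `y` towards `x`
brings one closer to `z` at first if and only if that inner product is positive. So the elementary
sets with `x ≠ y` are precisely the open half-spaces `{z | a < ⟪v, z⟫}` with `v ≠ 0`
(`mem_elemSet_iff` and `halfSpace_eq_elemSet`). By the Riesz representation theorem these are the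
preimages of open rays under nonzero continuous functionals, and such preimages form a subbasis of
the weak topology.
-/

open RealInnerProductSpace

/-- The weak topology on a real Hilbert space `H`: the topology induced by all continuous
real-linear functionals, i.e. the topology of Mathlib's `WeakSpace ℝ H`. -/
noncomputable def weakTop (H : Type*) [NormedAddCommGroup H] [InnerProductSpace ℝ H] :
    TopologicalSpace H :=
  show TopologicalSpace (WeakSpace ℝ H) from inferInstance

/-- The elementary set `U_x(y)`: points `z` whose nearest point on the segment `[x,y]`
is different from `y`; equivalently, there is a point of the segment strictly closer
to `z` than `y` is. -/
def elemSet {H : Type*} [NormedAddCommGroup H] [InnerProductSpace ℝ H] (x y : H) : Set H :=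
  {z : H | ∃ p ∈ segment ℝ x y, ‖z - p‖ < ‖z - y‖}

open Topology

theorem mem_elemSet_iff {H : Type*} [NormedAddCommGroup H] [InnerProductSpace ℝ H] (x y z : H) :
    z ∈ elemSet x y ↔ 0 < inner ℝ (z - y) (x - y) := by
  have key : ∀ t : ℝ, ‖z - (y + t • (x - y))‖ < ‖z - y‖ ↔
      t * (t * ‖x - y‖ ^ 2) < t * (2 * inner ℝ (z - y) (x - y)) := by
    intro t
    rw [← sub_sub, ← sq_lt_sq₀ (norm_nonneg _) (norm_nonneg _), norm_sub_sq_real,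
      real_inner_smul_right, norm_smul, mul_pow, Real.norm_eq_abs, sq_abs]
    constructor <;> intro h <;> nlinarith
  rw [elemSet, Set.mem_ofPred_eq, segment_symm, segment_eq_image']
  constructor
  · rintro ⟨_, ⟨t, ⟨ht0, -⟩, rfl⟩, ht⟩
    have h := lt_of_mul_lt_mul_left ((key t).1 ht) ht0
    have : 0 ≤ t * ‖x - y‖ ^ 2 := by positivity
    linarith
  · intro h
    have hb : 0 ≤ ‖x - y‖ ^ 2 := by positivity
    set a := inner ℝ (z - y) (x - y)
    set b := ‖x - y‖ ^ 2
    -- With this `t ∈ (0, 1]` we have `t * b < 2 * a`, which is what `key` needs.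
    refine ⟨_, ⟨a / (a + b), ⟨by positivity, ?_⟩, rfl⟩, (key _).2 ?_⟩
    · rw [div_le_one (by positivity)]
      linarith
    · refine mul_lt_mul_of_pos_left ?_ (by positivity)
      rw [div_mul_eq_mul_div, div_lt_iff₀ (by positivity)]
      nlinarith [mul_nonneg h.le hb, mul_pos h h]

theorem halfSpace_eq_elemSet {H : Type*} [NormedAddCommGroup H] [InnerProductSpace ℝ H]
    {v : H} (hv : v ≠ 0) (a : ℝ) :
    {z : H | a < inner ℝ v z} = elemSet ((a / ‖v‖ ^ 2) • v + v) ((a / ‖v‖ ^ 2) • v) := by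
  ext z
  have h : ‖v‖ ^ 2 ≠ 0 := by simpa using hv
  rw [mem_elemSet_iff, add_sub_cancel_left, inner_sub_left, real_inner_smul_left,
    real_inner_self_eq_norm_sq, div_mul_cancel₀ _ h, sub_pos, real_inner_comm]
  rfl

theorem weakTop_eq_induced (H : Type*) [NormedAddCommGroup H] [InnerProductSpace ℝ H] :
    weakTop H = TopologicalSpace.induced (fun (x : H) (f : StrongDual ℝ H) => f x)
      Pi.topologicalSpace :=
  rfl

theorem stmt_1 {H : Type*} [NormedAddCommGroup H] [InnerProductSpace ℝ H] [CompleteSpace H] :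
    TopologicalSpace.generateFrom {U : Set H | ∃ x y : H, x ≠ y ∧ U = elemSet x y} =
      weakTop H := by
  apply le_antisymm
  · rw [← continuous_id_iff_le]
    let τ := TopologicalSpace.generateFrom {U : Set H | ∃ x y : H, x ≠ y ∧ U = elemSet x y}
    have ray : ∀ v : H, v ≠ 0 → ∀ a : ℝ, IsOpen[τ] {z : H | a < inner ℝ v z} := fun v hv a =>
      TopologicalSpace.isOpen_generateFrom_of_mem
        ⟨_, _, by simpa using hv, halfSpace_eq_elemSet hv a⟩
    have cont : ∀ v : H, Continuous[τ, inferInstance] fun z : H => (inner ℝ v z : ℝ) := by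
      intro v
      by_cases hv : v = 0
      · subst hv
        simp only [inner_zero_left]
        exact @continuous_const _ _ τ _ _
      · refine (@OrderTopology.continuous_iff _ _ _ _ _ τ _).2 fun a => ⟨ray v hv a, ?_⟩
        have h := ray (-v) (neg_ne_zero.2 hv) (-a)
        simp only [inner_neg_left, neg_lt_neg_iff] at h
        exact h
    rw [weakTop_eq_induced]
    refine continuous_induced_rng.2 (continuous_pi fun f => ?_)
    have h := cont ((InnerProductSpace.toDual ℝ H).symm f)
    simp only [InnerProductSpace.toDual_symm_apply] at h
    exact h
  · refine le_generateFrom ?_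
    rintro _ ⟨x, y, -, rfl⟩
    have h : Continuous[weakTop H, inferInstance] fun z : H => (inner ℝ (x - y) z : ℝ) :=
      WeakBilin.eval_continuous (topDualPairing ℝ H).flip (InnerProductSpace.toDual ℝ H (x - y))
    have e : elemSet x y =
        (fun z : H => (inner ℝ (x - y) z : ℝ)) ⁻¹' Set.Ioi (inner ℝ (x - y) y) := by
      ext z
      rw [mem_elemSet_iff, real_inner_comm, inner_sub_right, sub_pos]
      rfl
    rw [e]
    exact @IsOpen.preimage _ _ (weakTop H) _ _ h _ isOpen_Ioi
end

section
/- Let H be a real Hilbert space and let (eₙ)ₙ∈ℕ be an orthonormal sequence in H. Let A := {√(n+1)·eₙ : n ∈ ℕ}. Then A is weakly sequentially closed: whenever (aₖ) is a sequence of elements of A that converges to some x ∈ H in the weak topology, then x ∈ A. -/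
/-! A weakly convergent sequence is norm bounded by the uniform boundedness principle. Since
`‖√(n+1) • e n‖ = √(n+1) → ∞`, such a sequence in `A` meets only finitely many points of `A`, so it
takes one value `√(m+1) • e m` infinitely often. Testing against any functional, the weak limit
must be that value, as limits in `ℝ` are unique. -/

open RealInnerProductSpace

open Filter Topology in
/-- Weak convergence gives convergence of all inner products, the functionals `⟪y, ·⟫` being
weakly continuous. -/
lemma tendsto_inner_of_tendsto_weakTop {H : Type*} [NormedAddCommGroup H]
    [InnerProductSpace ℝ H] {a : ℕ → H} {x : H}
    (h : Tendsto a atTop (@nhds H (weakTop H) x)) (y : H) :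
    Tendsto (fun k => ⟪y, a k⟫) atTop (𝓝 ⟪y, x⟫) := by
  have hc : @Continuous H ℝ (weakTop H) _ (fun z : H => ⟪y, z⟫) :=
    WeakBilin.eval_continuous (topDualPairing ℝ H).flip (innerSL ℝ y)
  exact (@Continuous.tendsto H ℝ (weakTop H) _ _ hc x).comp h

open Filter Topology in
lemma exists_norm_le_of_tendsto_weakTop {H : Type*} [NormedAddCommGroup H]
    [InnerProductSpace ℝ H] [CompleteSpace H] {a : ℕ → H} {x : H}
    (h : Tendsto a atTop (@nhds H (weakTop H) x)) : ∃ C, ∀ k, ‖a k‖ ≤ C := by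
  -- The vectors `a k`, viewed as the functionals `⟪a k, ·⟫` of the same norm, are pointwise bounded.
  obtain ⟨C, hC⟩ := banach_steinhaus (g := fun k => innerSL ℝ (a k)) fun y => by
    obtain ⟨C, hC⟩ := (tendsto_inner_of_tendsto_weakTop h y).norm.bddAbove_range
    refine ⟨C, fun k => ?_⟩
    rw [innerSL_apply_apply, real_inner_comm]
    exact hC ⟨k, rfl⟩
  exact ⟨C, fun k => by simpa using hC k⟩

theorem stmt_4 {H : Type*} [NormedAddCommGroup H] [InnerProductSpace ℝ H] [CompleteSpace H]
    (e : ℕ → H) (he : Orthonormal ℝ e)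
    (A : Set H) (hA : A = Set.range fun n : ℕ => Real.sqrt (n + 1) • e n)
    (a : ℕ → H) (ha : ∀ k, a k ∈ A) (x : H)
    (hconv : Filter.Tendsto a Filter.atTop (@nhds H (weakTop H) x)) :
    x ∈ A := by
  subst hA
  choose n hn using ha
  obtain ⟨C, hC⟩ := exists_norm_le_of_tendsto_weakTop hconv
  have hb : ∀ k, n k < ⌈C ^ 2⌉₊ := fun k => by
    have h1 : √((n k : ℝ) + 1) ≤ C := by
      have h2 := hC k
      rw [← hn k, norm_smul, he.1, mul_one, Real.norm_of_nonneg (Real.sqrt_nonneg _)] at h2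
      exact h2
    have h3 := (Real.sqrt_le_left ((Real.sqrt_nonneg _).trans h1)).1 h1
    exact Nat.lt_ceil.2 (by linarith)
  obtain ⟨m, hm⟩ := Finite.exists_infinite_fiber fun k => (⟨n k, hb k⟩ : Fin ⌈C ^ 2⌉₊)
  have hfreq : ∃ᶠ k in Filter.atTop, n k = m :=
    Nat.frequently_atTop_iff_infinite.2 <| (Set.infinite_coe_iff.1 hm).mono
      fun k (hk : (⟨n k, hb k⟩ : Fin ⌈C ^ 2⌉₊) = m) => congrArg Fin.val hk
  refine ⟨m, ext_inner_left ℝ fun y => ?_⟩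
  refine (tendsto_nhds_unique_of_frequently_eq (tendsto_inner_of_tendsto_weakTop hconv y)
    tendsto_const_nhds (hfreq.mono fun k hk => ?_)).symm
  rw [← hn k, hk]
end

section
/- Let H be a real Hilbert space and let (eₙ)ₙ∈ℕ be an orthonormal sequence in H. Let A := {√(n+1)·eₙ : n ∈ ℕ}. Then 0 belongs to the closure of A in the weak topology, although 0 ∉ A; in particular A is not closed in the weak topology. -/
/-!
Weak neighbourhoods of `0` are controlled by finitely many functionals `f`, through conditions
`|f x| < ε f`. By the Riesz representation theorem and Bessel's inequality, each series
`∑ (f (e n))² / (ε f)²` converges, and hence so does the sum of these finitely many series. As the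
harmonic series diverges, some `n` satisfies `∑ f, (f (e n))² / (ε f)² < 1 / (n + 1)`
(`exists_sqrt_mul_abs_lt`), which places `√(n + 1) • e n` in the neighbourhood.
-/


open RealInnerProductSpace

/-- Bessel's inequality, transported to functionals by the Riesz representation theorem. -/
lemma summable_sq_apply {H : Type*} [NormedAddCommGroup H] [InnerProductSpace ℝ H]
    [CompleteSpace H] {e : ℕ → H} (he : Orthonormal ℝ e) (f : StrongDual ℝ H) :
    Summable fun n => f (e n) ^ 2 := by
  have h := he.inner_products_summable ((InnerProductSpace.toDual ℝ H).symm f)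
  refine h.congr fun n => ?_
  rw [real_inner_comm, InnerProductSpace.toDual_symm_apply, Real.norm_eq_abs, sq_abs]

lemma exists_sqrt_mul_abs_lt {H : Type*} [NormedAddCommGroup H] [InnerProductSpace ℝ H]
    [CompleteSpace H] {e : ℕ → H} (he : Orthonormal ℝ e) (I : Finset (StrongDual ℝ H))
    (ε : StrongDual ℝ H → ℝ) (hε : ∀ f ∈ I, 0 < ε f) :
    ∃ n : ℕ, ∀ f ∈ I, Real.sqrt (n + 1) * |f (e n)| < ε f := by
  have hs : Summable fun n => ∑ f ∈ I, f (e n) ^ 2 / ε f ^ 2 :=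
    summable_sum fun f _ => (summable_sq_apply he f).div_const _
  obtain ⟨n, hn⟩ : ∃ n : ℕ, ∑ f ∈ I, f (e n) ^ 2 / ε f ^ 2 < 1 / ((n : ℝ) + 1) := by
    by_contra! h
    have h1 : Summable fun n : ℕ => 1 / ((n : ℝ) + 1) :=
      hs.of_nonneg_of_le (fun n => by positivity) h
    refine Real.not_summable_one_div_natCast ((summable_nat_add_iff 1).1 ?_)
    simpa using h1
  refine ⟨n, fun f hf => ?_⟩
  have hle : f (e n) ^ 2 / ε f ^ 2 ≤ ∑ f ∈ I, f (e n) ^ 2 / ε f ^ 2 :=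
    Finset.single_le_sum (f := fun f : StrongDual ℝ H => f (e n) ^ 2 / ε f ^ 2)
      (fun _ _ => by positivity) hf
  have hpos := hε f hf
  have hlt := hle.trans_lt hn
  rw [div_lt_div_iff₀ (by positivity) (by positivity)] at hlt
  refine lt_of_pow_lt_pow_left₀ 2 hpos.le ?_
  rw [mul_pow, Real.sq_sqrt (by positivity), sq_abs]
  linarith

lemma zero_mem_weak_closure {H : Type*} [NormedAddCommGroup H] [InnerProductSpace ℝ H]
    [CompleteSpace H] {e : ℕ → H} (he : Orthonormal ℝ e) :
    (0 : H) ∈ @closure H (weakTop H) (Set.range fun n : ℕ => Real.sqrt (n + 1) • e n) := by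
  have hT : weakTop H = TopologicalSpace.induced
      (fun (x : H) (f : StrongDual ℝ H) => f x) inferInstance := rfl
  rw [hT, closure_induced, mem_closure_iff]
  intro U hU h0
  obtain ⟨I, u, hu, hsub⟩ := isOpen_pi_iff.1 hU _ h0
  have hball : ∀ f : StrongDual ℝ H, ∃ ε : ℝ, f ∈ I → 0 < ε ∧ Metric.ball (0 : ℝ) ε ⊆ u f := by
    intro f
    by_cases hf : f ∈ I
    · obtain ⟨ε, h1, h2⟩ := Metric.isOpen_iff.1 (hu f hf).1 _ (hu f hf).2
      exact ⟨ε, fun _ => ⟨h1, by simpa using h2⟩⟩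
    · exact ⟨0, fun h => absurd h hf⟩
  choose ε hε using hball
  obtain ⟨n, hn⟩ := exists_sqrt_mul_abs_lt he I ε fun f hf => (hε f hf).1
  refine ⟨_, hsub fun f hf => (hε f hf).2 ?_, Set.mem_image_of_mem _ (Set.mem_range_self n)⟩
  have := hn f hf
  simpa [abs_mul, abs_of_nonneg (Real.sqrt_nonneg _)] using this

theorem stmt_5 {H : Type*} [NormedAddCommGroup H] [InnerProductSpace ℝ H] [CompleteSpace H]
    (e : ℕ → H) (he : Orthonormal ℝ e)
    (A : Set H) (hA : A = Set.range fun n : ℕ => Real.sqrt (n + 1) • e n) :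
    (0 : H) ∈ @closure H (weakTop H) A ∧ (0 : H) ∉ A ∧ ¬ @IsClosed H (weakTop H) A := by
  subst hA
  have hcl := zero_mem_weak_closure he
  have h0 : (0 : H) ∉ Set.range fun n : ℕ => Real.sqrt (n + 1) • e n := by
    rintro ⟨n, hn⟩
    exact smul_ne_zero (Real.sqrt_pos.2 (by positivity)).ne' (he.ne_zero n) hn
  refine ⟨hcl, h0, fun hc => h0 ?_⟩
  rwa [@IsClosed.closure_eq H (weakTop H) _ hc] at hcl
end

section
/- Let H be a real Hilbert space, let x, y ∈ H with x ≠ y, and let a = (1−t)x + ty for some t ∈ (0,1) (so a ∈ [x,y], a ≠ x, a ≠ y). If z ∈ U_x(a), then the nearest point P_{[x,y]} z lies in [x,a] and is different from a. In particular, U_x(a) ⊆ U_x(y). -/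
/-!
Along the line through `x` and `y`, the distance `g s = ‖z - ((1 - s) • x + s • y)‖` is a convex
function of the real parameter `s`. If `z ∈ U_x(a)`, then `g s₀ < g t` for some `s₀ < t`, so by
convexity `g` exceeds `g t` everywhere to the right of `t`. A nearest point, where `g ≤ g s₀`,
therefore has parameter `< t`; and `g 1 > g t > g s₀` shows `z ∈ U_x(y)`.
-/

open RealInnerProductSpace

lemma convexOn_dist_line {H : Type*} [NormedAddCommGroup H] [InnerProductSpace ℝ H] (x y z : H) :
    ConvexOn ℝ Set.univ (fun s : ℝ => ‖z - ((1 - s) • x + s • y)‖) := by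
  have h := (convexOn_univ_norm (E := H)).comp_affineMap (AffineMap.lineMap (k := ℝ) (z - x) (z - y))
  rw [Set.preimage_univ] at h
  refine h.congr fun s _ => ?_
  simp only [Function.comp, AffineMap.lineMap_apply_module]
  congr 1
  module

theorem stmt_7 {H : Type*} [NormedAddCommGroup H] [InnerProductSpace ℝ H] [CompleteSpace H]
    (x y a : H) (hxy : x ≠ y) (t : ℝ) (ht : t ∈ Set.Ioo (0 : ℝ) 1)
    (ha : a = (1 - t) • x + t • y) :
    (∀ z ∈ elemSet x a, ∀ p ∈ segment ℝ x y,
      (∀ q ∈ segment ℝ x y, ‖z - p‖ ≤ ‖z - q‖) → p ∈ segment ℝ x a ∧ p ≠ a) ∧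
    elemSet x a ⊆ elemSet x y := by
  obtain ⟨ht0, ht1⟩ := ht
  -- In the parameter of `[x,y]`: some `s₀ ∈ [0,t)` is closer to `z` than `t`, and every
  -- parameter beyond `t` is farther from `z` than `t`.
  have key : ∀ z ∈ elemSet x a, ∃ s₀ : ℝ, 0 ≤ s₀ ∧ s₀ < t ∧
      ‖z - ((1 - s₀) • x + s₀ • y)‖ < ‖z - a‖ ∧
      ∀ s, t < s → ‖z - a‖ < ‖z - ((1 - s) • x + s • y)‖ := by
    rintro z ⟨p, hp, hlt⟩
    rw [segment_eq_image] at hp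
    obtain ⟨θ, ⟨h0, h1⟩, rfl⟩ := hp
    have e : (1 - θ) • x + θ • a = (1 - θ * t) • x + (θ * t) • y := by
      rw [ha]; module
    have hθ : θ < 1 := by
      refine lt_of_le_of_ne h1 ?_
      rintro rfl
      simp at hlt
    have hst : θ * t < t := by nlinarith
    simp only [e] at hlt
    refine ⟨θ * t, by positivity, hst, hlt, fun s hs => ?_⟩
    rw [ha] at hlt ⊢
    exact (convexOn_dist_line x y z).lt_right_of_left_lt (Set.mem_univ _) (Set.mem_univ _)
      (by rw [openSegment_eq_Ioo (hst.trans hs)]; exact ⟨hst, hs⟩) hlt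
  constructor
  · intro z hz p hp hmin
    obtain ⟨s₀, hs0, hst, hlt, hfar⟩ := key z hz
    have hpa : ‖z - p‖ < ‖z - a‖ := by
      refine (hmin _ ?_).trans_lt hlt
      rw [segment_eq_image]
      exact ⟨s₀, ⟨hs0, by linarith⟩, rfl⟩
    refine ⟨?_, by rintro rfl; exact lt_irrefl _ hpa⟩
    rw [segment_eq_image] at hp
    obtain ⟨s, ⟨h0, h1⟩, rfl⟩ := hp
    have hs : s ≤ t := by
      by_contra! h
      exact lt_asymm hpa (hfar s h)
    rw [segment_eq_image]
    refine ⟨s / t, ⟨by positivity, (div_le_one ht0).2 hs⟩, ?_⟩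
    have e : s = s / t * t := by field_simp
    generalize s / t = r at e ⊢
    subst e
    simp only [ha]
    module
  · intro z hz
    obtain ⟨s₀, hs0, hst, hlt, hfar⟩ := key z hz
    refine ⟨(1 - s₀) • x + s₀ • y, ?_, hlt.trans (by simpa using hfar 1 ht1)⟩
    rw [segment_eq_image]
    exact ⟨s₀, ⟨hs0, by linarith⟩, rfl⟩
end

section
/- Let H be a real Hilbert space, let x, y ∈ H with x ≠ y, and let a = (1−t)x + ty for some t ∈ (0,1). Then the elementary sets U_x(a) and U_y(a) are disjoint: U_x(a) ∩ U_y(a) = ∅. -/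
/-! A point `z` of `elemSet x y` satisfies `0 < ⟪z - y, x - y⟫`: moving from `y` towards `x`
can only decrease the distance to `z` if `x` lies on the same side of `y` as `z`. For `a` strictly
between `x` and `y`, the vectors `x - a` and `y - a` are positive multiples of `x - y` and
`-(x - y)`, so both inequalities cannot hold for the same `z`. -/

open RealInnerProductSpace

lemma inner_pos_of_mem_elemSet {H : Type*} [NormedAddCommGroup H] [InnerProductSpace ℝ H]
    {x y z : H} (hz : z ∈ elemSet x y) : 0 < inner ℝ (z - y) (x - y) := by
  obtain ⟨p, ⟨r, s, hr, -, hrs, rfl⟩, hlt⟩ := hz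
  have hp : z - (r • x + s • y) = (z - y) - r • (x - y) := by
    obtain rfl : s = 1 - r := by linarith
    module
  rw [hp] at hlt
  have hsq : ‖(z - y) - r • (x - y)‖ ^ 2 < ‖z - y‖ ^ 2 := by gcongr
  rw [norm_sub_sq_real, inner_smul_right] at hsq
  have hpos : 0 < r * inner ℝ (z - y) (x - y) := by
    nlinarith [sq_nonneg ‖r • (x - y)‖]
  exact pos_of_mul_pos_right hpos hr

theorem stmt_8 {H : Type*} [NormedAddCommGroup H] [InnerProductSpace ℝ H] [CompleteSpace H]
    (x y a : H) (hxy : x ≠ y) (t : ℝ) (ht : t ∈ Set.Ioo (0 : ℝ) 1)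
    (ha : a = (1 - t) • x + t • y) :
    elemSet x a ∩ elemSet y a = ∅ := by
  refine Set.eq_empty_iff_forall_notMem.2 fun z hz => ?_
  have hx := inner_pos_of_mem_elemSet hz.1
  have hy := inner_pos_of_mem_elemSet hz.2
  have hxa : x - a = t • (x - y) := by rw [ha]; module
  have hya : y - a = (-(1 - t)) • (x - y) := by rw [ha]; module
  rw [hxa, inner_smul_right] at hx
  rw [hya, inner_smul_right] at hy
  have h := pos_of_mul_pos_right hx ht.1.le
  nlinarith [mul_pos h (sub_pos.2 ht.2)]
end

section
/- Let H be a real Hilbert space, let x ∈ H, ε > 0, and let K be the closed ball of radius ε around x. Let y ∈ K and let m = (x + y)/2 be the midpoint of x and y. Let z ∈ H with ‖z − x‖ > ε, and let p ∈ K be the nearest point of z in K (i.e. ‖z − p‖ ≤ ‖z − w‖ for all w ∈ K). If ‖y − p‖ ≤ ε/2, then the nearest point of z on the segment [x,m] is m, i.e. ‖z − m‖ ≤ ‖z − q‖ for all q ∈ [x,m]. -/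
/-!
Translate so that `x = 0`, and write `Z = z - x`, `P = p - x`, `v = y - x`, `r = ‖Z‖ > ε`.
The nearest point of `Z` in the ball is its radial projection `P = (ε / r) Z`
(`radial_of_nearest`). Hence `‖P‖ = ε`, and expanding `‖v - P‖² ≤ ε² / 4` gives
`⟪P, v⟫ ≥ ‖v‖² / 2 ≥ 0`, so `⟪Z, v⟫ = (r / ε) ⟪P, v⟫ ≥ ⟪P, v⟫ ≥ ‖v‖² / 2`.
The squared distance `‖Z - (t / 2) v‖² = r² - t ⟪Z, v⟫ + t² ‖v‖² / 4` is therefore nonincreasing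
in `t ∈ [0, 1]`, so its minimum over the segment is at `t = 1`, the midpoint.
-/

open RealInnerProductSpace

/-- A point `P` of the ball of radius `ε` around `0` that is at most as far from `Z` as the radial
projection of `Z` is equals that projection: expanding the square gives
`‖r P - ε Z‖² ≤ r (r - ε) (‖P‖² - ε²) ≤ 0` for `r = ‖Z‖`. -/
lemma radial_of_nearest {H : Type*} [NormedAddCommGroup H] [InnerProductSpace ℝ H]
    {Z P : H} {ε : ℝ} (hε : 0 < ε) (hZ : ε < ‖Z‖) (hP : ‖P‖ ≤ ε) (h : ‖Z - P‖ ≤ ‖Z‖ - ε) :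
    ‖Z‖ • P = ε • Z := by
  rw [← sub_eq_zero, ← norm_eq_zero, ← sq_eq_zero_iff]
  refine le_antisymm ?_ (sq_nonneg _)
  have h1 : ‖Z - P‖ ^ 2 ≤ (‖Z‖ - ε) ^ 2 := by gcongr
  rw [norm_sub_sq_real] at h1
  rw [norm_sub_sq_real, norm_smul, norm_smul, inner_smul_left, inner_smul_right,
    real_inner_comm, Real.norm_of_nonneg (norm_nonneg Z), Real.norm_of_nonneg hε.le]
  simp only [conj_trivial]
  have hr : 0 < ‖Z‖ := hε.trans hZ
  have h2 : ‖P‖ ^ 2 ≤ ε ^ 2 := by gcongr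
  have h3 := mul_le_mul_of_nonneg_left h1 (mul_pos hr hε).le
  have h4 := mul_nonneg (mul_nonneg hr.le (sub_pos.2 hZ).le) (sub_nonneg.2 h2)
  nlinarith

theorem stmt_11 {H : Type*} [NormedAddCommGroup H] [InnerProductSpace ℝ H] [CompleteSpace H]
    (x : H) (ε : ℝ) (hε : 0 < ε) (y : H) (hy : y ∈ Metric.closedBall x ε)
    (m : H) (hm : m = (2 : ℝ)⁻¹ • (x + y)) (z : H) (hz : ε < ‖z - x‖)
    (p : H) (hpK : p ∈ Metric.closedBall x ε)
    (hp : ∀ w ∈ Metric.closedBall x ε, ‖z - p‖ ≤ ‖z - w‖)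
    (hyp : ‖y - p‖ ≤ ε / 2) :
    ∀ q ∈ segment ℝ x m, ‖z - m‖ ≤ ‖z - q‖ := by
  rw [mem_closedBall_iff_norm] at hy hpK
  set Z := z - x with hZ
  set P := p - x with hP
  set v := y - x with hv
  have hr : 0 < ‖Z‖ := hε.trans hz
  -- Test the minimality of `p` against the radial projection of `z`.
  have hnear : ‖Z - P‖ ≤ ‖Z‖ - ε := by
    have hc := hp (x + (ε / ‖Z‖) • Z) (by
      rw [mem_closedBall_iff_norm, add_sub_cancel_left, norm_smul,
        Real.norm_of_nonneg (by positivity), div_mul_cancel₀ _ hr.ne'])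
    have e1 : z - (x + (ε / ‖Z‖) • Z) = (1 - ε / ‖Z‖) • Z := by
      rw [sub_smul, one_smul, ← sub_sub]
    have h0 : 0 ≤ 1 - ε / ‖Z‖ := sub_nonneg.2 ((div_le_one hr).2 hz.le)
    rw [e1, norm_smul, Real.norm_of_nonneg h0, sub_mul, one_mul, div_mul_cancel₀ _ hr.ne'] at hc
    rwa [hZ, hP, sub_sub_sub_cancel_right]
  have hrad := radial_of_nearest hε hz hpK hnear
  have hPn : ‖P‖ = ε := by
    have h := congrArg norm hrad
    rw [norm_smul, norm_smul, norm_norm, Real.norm_of_nonneg hε.le, mul_comm ε] at h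
    exact mul_left_cancel₀ hr.ne' h
  have hin : ‖Z‖ * ⟪P, v⟫ = ε * ⟪Z, v⟫ := by
    rw [← real_inner_smul_left, hrad, real_inner_smul_left]
  have hPv : ‖v‖ ^ 2 / 2 ≤ ⟪P, v⟫ := by
    have h : ‖v - P‖ ^ 2 ≤ (ε / 2) ^ 2 := by
      rw [hv, hP, sub_sub_sub_cancel_right]
      gcongr
    rw [norm_sub_sq_real, hPn, real_inner_comm] at h
    nlinarith
  have hZv : ‖v‖ ^ 2 / 2 ≤ ⟪Z, v⟫ := by
    have h0 : 0 ≤ ⟪P, v⟫ := le_trans (by positivity) hPv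
    have h1 : ε * ⟪P, v⟫ ≤ ε * ⟪Z, v⟫ := hin ▸ mul_le_mul_of_nonneg_right hz.le h0
    exact hPv.trans (le_of_mul_le_mul_left h1 hε)
  have key (t : ℝ) : ‖Z - (t / 2) • v‖ ^ 2 = ‖Z‖ ^ 2 - t * ⟪Z, v⟫ + t ^ 2 * ‖v‖ ^ 2 / 4 := by
    rw [norm_sub_sq_real, real_inner_smul_right, norm_smul, mul_pow, Real.norm_eq_abs, sq_abs]
    ring
  intro q hq
  rw [segment_eq_image'] at hq
  obtain ⟨t, ⟨ht0, ht1⟩, rfl⟩ := hq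
  have em : z - m = Z - ((1 : ℝ) / 2) • v := by
    rw [hm, hZ, hv]
    module
  have eq : z - (x + t • (m - x)) = Z - (t / 2) • v := by
    rw [hm, hZ, hv]
    module
  beta_reduce
  rw [em, eq]
  rw [← sq_le_sq₀ (norm_nonneg _) (norm_nonneg _)]
  rw [key, key]
  have h1 := mul_le_mul_of_nonneg_left hZv (sub_nonneg.2 ht1)
  have h2 := mul_nonneg (mul_nonneg (sub_nonneg.2 ht1) (sub_nonneg.2 ht1)) (sq_nonneg ‖v‖)
  nlinarith
end

section
/- Let H be a real Hilbert space, let x ∈ H, ε > 0, and let K be the closed ball of radius ε around x. Suppose y₁, …, yₙ ∈ K form an ε/2-net of K, i.e. for every w ∈ K there exists i with ‖w − yᵢ‖ ≤ ε/2. For each i let mᵢ = (x + yᵢ)/2 be the midpoint of x and yᵢ. Then U_x(m₁) ∩ … ∩ U_x(mₙ) ⊆ K. -/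
/-!
Put `u = yᵢ - x` and `v = z - x`. Membership of `z` in the elementary set of the midpoint
`x + u / 2` forces `⟪v, u⟫ < ‖u‖² / 2`. If `‖v‖ > ε`, let `e = (ε / ‖v‖) v` and choose `yᵢ` within
`ε / 2` of `x + e`. Expanding `‖e - u‖² ≤ ε² / 4` with `‖e‖ = ε` gives
`⟪e, u⟫ ≥ 3 ε² / 8 + ‖u‖² / 2 > 0`, and `⟪v, u⟫ = (‖v‖ / ε) ⟪e, u⟫ ≥ ⟪e, u⟫`, a contradiction.
-/

open RealInnerProductSpace

/-- The elementary set of the midpoint of `x` and `y` lies in an open half-space. -/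
lemma inner_lt_of_mem_elemSet_midpoint {H : Type*} [NormedAddCommGroup H] [InnerProductSpace ℝ H]
    {x y z : H} (h : z ∈ elemSet x ((2 : ℝ)⁻¹ • (x + y))) :
    ⟪z - x, y - x⟫ < ‖y - x‖ ^ 2 / 2 := by
  obtain ⟨p, hp, hlt⟩ := h
  rw [segment_eq_image'] at hp
  obtain ⟨t, ⟨ht0, ht1⟩, rfl⟩ := hp
  have expand (s : ℝ) : ‖(z - x) - (s / 2) • (y - x)‖ ^ 2
      = ‖z - x‖ ^ 2 - s * ⟪z - x, y - x⟫ + s ^ 2 / 4 * ‖y - x‖ ^ 2 := by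
    rw [norm_sub_sq_real, inner_smul_right, norm_smul, mul_pow, Real.norm_eq_abs, sq_abs]
    ring
  have e1 : z - (x + t • ((2 : ℝ)⁻¹ • (x + y) - x)) = (z - x) - (t / 2) • (y - x) := by
    module
  have e2 : z - (2 : ℝ)⁻¹ • (x + y) = (z - x) - ((1 : ℝ) / 2) • (y - x) := by
    module
  dsimp only at hlt
  rw [e1, e2] at hlt
  have hsq := pow_lt_pow_left₀ hlt (norm_nonneg _) two_ne_zero
  rw [expand, expand] at hsq
  -- The strict inequality rules out `t = 1`; dividing it by `1 - t` bounds the inner product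
  -- by `(1 + t) / 4 * ‖y - x‖ ^ 2`.
  have hprod : 0 < (1 - t) * ((1 + t) / 4 * ‖y - x‖ ^ 2 - ⟪z - x, y - x⟫) := by
    linarith
  have hpos := pos_of_mul_pos_right hprod (by linarith : 0 ≤ 1 - t)
  nlinarith [mul_nonneg (sub_nonneg.2 ht1) (sq_nonneg ‖y - x‖)]

theorem stmt_12 {H : Type*} [NormedAddCommGroup H] [InnerProductSpace ℝ H] [CompleteSpace H]
    (x : H) (ε : ℝ) (hε : 0 < ε) (n : ℕ) (y : Fin n → H)
    (hy : ∀ i, y i ∈ Metric.closedBall x ε)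
    (hnet : ∀ w ∈ Metric.closedBall x ε, ∃ i, ‖w - y i‖ ≤ ε / 2) :
    (⋂ i, elemSet x ((2 : ℝ)⁻¹ • (x + y i))) ⊆ Metric.closedBall x ε := by
  intro z hz
  rw [Set.mem_iInter] at hz
  rw [mem_closedBall_iff_norm]
  by_contra! hr
  have hr0 : 0 < ‖z - x‖ := hε.trans hr
  set c : ℝ := ε / ‖z - x‖ with hc
  have hc0 : 0 < c := div_pos hε hr0
  have hc1 : c < 1 := (div_lt_one hr0).2 hr
  have hnorm : ‖c • (z - x)‖ = ε := by
    rw [norm_smul, Real.norm_of_nonneg hc0.le, hc, div_mul_cancel₀ _ hr0.ne']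
  obtain ⟨i, hi⟩ := hnet (x + c • (z - x)) (by
    rw [mem_closedBall_iff_norm, add_sub_cancel_left, hnorm])
  have hin := inner_lt_of_mem_elemSet_midpoint (hz i)
  have e : x + c • (z - x) - y i = c • (z - x) - (y i - x) := by abel
  rw [e] at hi
  have hsq := pow_le_pow_left₀ (norm_nonneg _) hi 2
  rw [norm_sub_sq_real, hnorm, real_inner_smul_left] at hsq
  have hε2 : 0 < ε ^ 2 := by positivity
  have hcin : 0 < c * ⟪z - x, y i - x⟫ := by nlinarith [sq_nonneg ‖y i - x‖]
  have hin0 : 0 < ⟪z - x, y i - x⟫ := pos_of_mul_pos_right hcin hc0.le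
  nlinarith [mul_pos (sub_pos.2 hc1) hin0]
end

section
/- Let H be a real Hilbert space, let F be a filter on H, and let x ∈ H. Then F converges to x in the weak topology if and only if for every y ∈ H with y ≠ x, the pushforward of F under the nearest-point projection onto the segment [x,y] converges to x in the norm topology; i.e., for every y ≠ x and every function P : H → H satisfying P z ∈ [x,y] and ‖z − P z‖ ≤ ‖z − q‖ for all z ∈ H and q ∈ [x,y], one has Tendsto P F (nhds x in norm). -/
/-!
Write `v = y - x`. Comparing the nearest point `P z = x + t • v` with the endpoint `x` gives
`‖P z - x‖ * ‖v‖ ≤ 2 * |⟪v, z - x⟫|`, so weak convergence to `x` forces `P z → x` in norm.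
Comparing it with the endpoint `y` shows that `P z ≠ y` forces `⟪v, z - x⟫ < ‖v‖ ^ 2`. When
`P` tends to `x ≠ y`, the points `P z` are eventually different from `y`; taking
`v = (ε / ‖u‖ ^ 2) • u` turns this into `⟪u, z - x⟫ < ε` eventually, and with `-u` in place of
`u` one gets `⟪u, z⟫ → ⟪u, x⟫`. By the Riesz representation theorem these convergences for
all `u` amount to weak convergence.
-/

open RealInnerProductSpace

/-- By the Riesz representation theorem, weak convergence may be tested on inner products. -/
theorem le_nhds_weakTop_iff {H : Type*} [NormedAddCommGroup H] [InnerProductSpace ℝ H]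
    [CompleteSpace H] (F : Filter H) (x : H) :
    F ≤ @nhds H (weakTop H) x ↔
      ∀ u : H, Filter.Tendsto (fun z => inner ℝ u (z - x)) F (nhds 0) := by
  have hinj : Function.Injective ((topDualPairing ℝ H).flip) := by
    intro a b hab
    refine ext_inner_left ℝ fun u => ?_
    simpa using LinearMap.congr_fun hab (InnerProductSpace.toDual ℝ H u)
  have h := WeakBilin.tendsto_iff_forall_eval_tendsto (B := (topDualPairing ℝ H).flip)
    (l := F) (f := fun z : H => (z : WeakSpace ℝ H)) (x := x) hinj
  have h0 : F ≤ @nhds H (weakTop H) x ↔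
      ∀ f : StrongDual ℝ H, Filter.Tendsto (fun z => f z) F (nhds (f x)) := h
  rw [h0]
  have h1 : ∀ u : H, Filter.Tendsto (fun z => inner ℝ u (z - x)) F (nhds 0) ↔
      Filter.Tendsto (fun z => inner ℝ u z) F (nhds (inner ℝ u x)) := by
    intro u
    simp_rw [inner_sub_right]
    exact tendsto_sub_nhds_zero_iff
  simp_rw [h1]
  constructor
  · intro hf u
    simpa using hf (InnerProductSpace.toDual ℝ H u)
  · intro hu f
    simpa using hu ((InnerProductSpace.toDual ℝ H).symm f)

theorem exists_nearest_segment {H : Type*} [NormedAddCommGroup H] [InnerProductSpace ℝ H]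
    (x y z : H) : ∃ p ∈ segment ℝ x y, ∀ q ∈ segment ℝ x y, ‖z - p‖ ≤ ‖z - q‖ := by
  have hc : IsCompact (segment ℝ x y) := by
    rw [segment_eq_image_lineMap]
    exact isCompact_Icc.image (AffineMap.lineMap_continuous)
  exact hc.exists_isMinOn ⟨x, left_mem_segment ℝ x y⟩ (f := fun p => ‖z - p‖) (by fun_prop)

theorem norm_sub_add_smul_sq {H : Type*} [NormedAddCommGroup H] [InnerProductSpace ℝ H]
    (x v z : H) (t : ℝ) :
    ‖z - (x + t • v)‖ ^ 2 = ‖z - x‖ ^ 2 - 2 * t * inner ℝ v (z - x) + t ^ 2 * ‖v‖ ^ 2 := by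
  rw [← sub_sub, norm_sub_sq_real, inner_smul_right, real_inner_comm, norm_smul, mul_pow,
    Real.norm_eq_abs, sq_abs]
  ring

/-- The estimate obtained by comparing a nearest point `p` with the endpoint `x`. -/
theorem norm_nearest_sub_le {H : Type*} [NormedAddCommGroup H] [InnerProductSpace ℝ H]
    {x y z p : H} (hp : p ∈ segment ℝ x y) (hx : ‖z - p‖ ≤ ‖z - x‖) :
    ‖p - x‖ * ‖y - x‖ ≤ 2 * |inner ℝ (y - x) (z - x)| := by
  rw [segment_eq_image'] at hp
  obtain ⟨t, ⟨ht0, -⟩, rfl⟩ := hp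
  have h := pow_le_pow_left₀ (norm_nonneg _) hx 2
  simp only [norm_sub_add_smul_sq] at h
  rw [add_sub_cancel_left, norm_smul, Real.norm_of_nonneg ht0]
  rcases ht0.eq_or_lt with rfl | ht
  · simp
  · have hs := le_abs_self (inner ℝ (y - x) (z - x))
    have : t * (t * ‖y - x‖ ^ 2) ≤ t * (2 * inner ℝ (y - x) (z - x)) := by linarith
    have := le_of_mul_le_mul_left this ht
    linarith

/-- The estimate obtained by comparing a nearest point `p ≠ y` with the endpoint `y`. -/
theorem inner_lt_of_nearest_ne {H : Type*} [NormedAddCommGroup H] [InnerProductSpace ℝ H]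
    {x y z p : H} (hyx : y ≠ x) (hp : p ∈ segment ℝ x y) (hy : ‖z - p‖ ≤ ‖z - y‖)
    (hpy : p ≠ y) : inner ℝ (y - x) (z - x) < ‖y - x‖ ^ 2 := by
  rw [segment_eq_image'] at hp
  obtain ⟨t, ⟨-, ht1⟩, rfl⟩ := hp
  have ht : t < 1 := lt_of_le_of_ne ht1 (by rintro rfl; simp at hpy)
  have hv : 0 < ‖y - x‖ ^ 2 := pow_pos (norm_pos_iff.2 (sub_ne_zero.2 hyx)) 2
  have h := pow_le_pow_left₀ (norm_nonneg _) hy 2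
  have h1 := norm_sub_add_smul_sq x (y - x) z 1
  rw [one_smul, add_sub_cancel] at h1
  rw [h1, norm_sub_add_smul_sq] at h
  have h2 : (1 - t) * (2 * inner ℝ (y - x) (z - x)) ≤ (1 - t) * ((1 + t) * ‖y - x‖ ^ 2) := by
    linarith
  have h3 := le_of_mul_le_mul_left h2 (sub_pos.2 ht)
  nlinarith

theorem stmt_14 {H : Type*} [NormedAddCommGroup H] [InnerProductSpace ℝ H] [CompleteSpace H]
    (F : Filter H) (x : H) :
    F ≤ @nhds H (weakTop H) x ↔
      ∀ y : H, y ≠ x → ∀ P : H → H,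
        (∀ z : H, P z ∈ segment ℝ x y ∧ ∀ q ∈ segment ℝ x y, ‖z - P z‖ ≤ ‖z - q‖) →
        Filter.Tendsto P F (nhds x) := by
  rw [le_nhds_weakTop_iff]
  constructor
  · intro hw y hyx P hP
    have hv : 0 < ‖y - x‖ := norm_pos_iff.2 (sub_ne_zero.2 hyx)
    rw [tendsto_iff_norm_sub_tendsto_zero]
    have hlim : Filter.Tendsto (fun z => 2 * |inner ℝ (y - x) (z - x)| / ‖y - x‖) F
        (nhds 0) := by
      simpa using (((hw (y - x)).abs.const_mul 2).div_const ‖y - x‖)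
    refine squeeze_zero (fun _ => norm_nonneg _) (fun z => ?_) hlim
    rw [le_div_iff₀ hv]
    exact norm_nearest_sub_le (hP z).1 ((hP z).2 x (left_mem_segment ℝ x y))
  · intro h
    have key : ∀ u : H, ∀ ε > 0, ∀ᶠ z in F, inner ℝ u (z - x) < ε := by
      intro u ε hε
      rcases eq_or_ne u 0 with rfl | hu
      · simp [hε]
      have hu2 : 0 < ‖u‖ ^ 2 := pow_pos (norm_pos_iff.2 hu) 2
      obtain ⟨c, hc, hcu⟩ : ∃ c > 0, c * ‖u‖ ^ 2 = ε :=
        ⟨ε / ‖u‖ ^ 2, div_pos hε hu2, div_mul_cancel₀ _ hu2.ne'⟩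
      have hyx : x + c • u ≠ x := by simp [hc.ne', hu]
      choose P hP using exists_nearest_segment x (x + c • u)
      filter_upwards [(h _ hyx P hP).eventually_ne hyx.symm] with z hz
      have hlt := inner_lt_of_nearest_ne hyx (hP z).1
        ((hP z).2 _ (right_mem_segment ℝ x _)) hz
      rw [add_sub_cancel_left, real_inner_smul_left, norm_smul, mul_pow, Real.norm_of_nonneg hc.le,
        sq c, mul_assoc, hcu] at hlt
      exact lt_of_mul_lt_mul_left hlt hc.le
    intro u
    rw [Metric.tendsto_nhds]
    intro ε hε
    filter_upwards [key u ε hε, key (-u) ε hε] with z h1 h2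
    rw [inner_neg_left] at h2
    rw [Real.dist_eq, sub_zero, abs_lt]
    constructor <;> linarith
end

section
/- Let H be a real Hilbert space. The weak topology on H is the initial topology of the family of nearest-point projections onto compact segments: it equals the infimum, over all pairs x, y ∈ H with x ≠ y, of the topologies induced on H by the maps P_{[x,y]} : H → H (where the codomain carries the norm topology). In particular, every P_{[x,y]} is continuous from H with the weak topology to H with the norm topology, and the weak topology is the coarsest topology on H with this property. -/
/-!
The nearest point of `[x, y]` to `z` is `x + c • (y - x)`, where `c` is the value
`⟪z - x, y - x⟫ / ‖y - x‖ ^ 2` clamped to `[0, 1]` (`nearest_eq`). It is a norm-continuous function of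
a single continuous functional of `z`, so every projection is continuous for the weak topology.

Conversely, a functional is `⟪v, ·⟫` by the Riesz representation theorem. To see that it is
continuous at `z₀` for the topology generated by the projections, take the segment
`[z₀ - v, z₀ + v]`, whose midpoint is `z₀`. Whenever `⟪v, P z⟫` is close to its value at `z₀`, the
clamp is inactive, and then `⟪v, z⟫ = ⟪v, P z⟫`. Hence the functional agrees near `z₀` with a
continuous function.
-/

open RealInnerProductSpace

/-- The explicit formula for the nearest point of a nondegenerate segment. -/
lemma nearest_eq {H : Type*} [NormedAddCommGroup H] [InnerProductSpace ℝ H] {x y z p : H}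
    (hxy : x ≠ y) (hp : p ∈ segment ℝ x y) (hmin : ∀ q ∈ segment ℝ x y, ‖z - p‖ ≤ ‖z - q‖) :
    p = x + (max 0 (min 1 (⟪z - x, y - x⟫ / ‖y - x‖ ^ 2))) • (y - x) := by
  rw [segment_eq_image'] at hp hmin
  obtain ⟨s, ⟨hs0, hs1⟩, rfl⟩ := hp
  have hn : 0 < ‖y - x‖ ^ 2 := by
    have : 0 < ‖y - x‖ := norm_pos_iff.2 (sub_ne_zero.2 hxy.symm)
    positivity
  set t := ⟪z - x, y - x⟫ / ‖y - x‖ ^ 2 with ht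
  have hin : ⟪z - x, y - x⟫ = t * ‖y - x‖ ^ 2 := (div_mul_cancel₀ _ hn.ne').symm
  have key : ∀ r : ℝ, ‖z - (x + r • (y - x))‖ ^ 2
      = ‖z - x‖ ^ 2 + (r ^ 2 - 2 * r * t) * ‖y - x‖ ^ 2 := by
    intro r
    rw [← sub_sub, norm_sub_sq_real, inner_smul_right, hin, norm_smul, mul_pow, Real.norm_eq_abs,
      sq_abs]
    ring
  -- On the segment the squared distance to `z` is, up to a constant, a positive multiple of
  -- `(r - t) ^ 2`.
  have hq : ∀ r : ℝ, 0 ≤ r → r ≤ 1 → s ^ 2 - 2 * s * t ≤ r ^ 2 - 2 * r * t := by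
    intro r h0 h1
    have h := hmin _ ⟨r, ⟨h0, h1⟩, rfl⟩
    have h2 := pow_le_pow_left₀ (norm_nonneg _) h 2
    rw [key, key] at h2
    exact le_of_mul_le_mul_right (by linarith) hn
  suffices s = max 0 (min 1 t) by rw [← this]
  rcases le_total t 0 with h | h
  · rw [max_eq_left ((min_le_right _ _).trans h)]
    nlinarith [hq 0 le_rfl zero_le_one, mul_nonneg hs0 (neg_nonneg.2 h)]
  · rcases le_total t 1 with h1 | h1
    · rw [min_eq_right h1, max_eq_right h]
      have h3 : (s - t) ^ 2 ≤ 0 := by nlinarith [hq t h h1]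
      have h4 : (s - t) ^ 2 = 0 := le_antisymm h3 (sq_nonneg _)
      exact sub_eq_zero.1 (pow_eq_zero_iff two_ne_zero |>.1 h4)
    · rw [min_eq_left h1, max_eq_right zero_le_one]
      nlinarith [hq 1 zero_le_one le_rfl, mul_nonneg (sub_nonneg.2 hs1) (sub_nonneg.2 h1)]

lemma weakTop_eq_iInf (H : Type*) [NormedAddCommGroup H] [InnerProductSpace ℝ H] :
    weakTop H = ⨅ f : H →L[ℝ] ℝ,
      TopologicalSpace.induced f (inferInstance : TopologicalSpace ℝ) := by
  change TopologicalSpace.induced (fun (x : H) (f : H →L[ℝ] ℝ) => f x) Pi.topologicalSpace = _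
  rw [Pi.topologicalSpace, induced_iInf]
  simp only [induced_compose]
  rfl

theorem stmt_15 {H : Type*} [NormedAddCommGroup H] [InnerProductSpace ℝ H] [CompleteSpace H]
    (P : H → H → H → H)
    (hP : ∀ x y : H, x ≠ y → ∀ z : H,
      P x y z ∈ segment ℝ x y ∧ ∀ q ∈ segment ℝ x y, ‖z - P x y z‖ ≤ ‖z - q‖) :
    weakTop H =
      ⨅ (x : H) (y : H) (_ : x ≠ y),
        TopologicalSpace.induced (P x y) (inferInstance : TopologicalSpace H) := by
  have hform : ∀ x y : H, x ≠ y → ∀ z, P x y z =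
      x + (max 0 (min 1 (⟪z - x, y - x⟫ / ‖y - x‖ ^ 2))) • (y - x) := fun x y hxy z =>
    nearest_eq hxy (hP x y hxy z).1 (hP x y hxy z).2
  rw [weakTop_eq_iInf]
  apply le_antisymm
  · refine le_iInf fun x => le_iInf fun y => le_iInf fun hxy => ?_
    refine (iInf_le _ (innerSL ℝ (y - x))).trans ?_
    -- `P x y` factors as `g ∘ ⟪y - x, ·⟫` with `g` continuous.
    let g : ℝ → H := fun a =>
      x + (max 0 (min 1 ((a - ⟪y - x, x⟫) / ‖y - x‖ ^ 2))) • (y - x)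
    have hg : Continuous g := by
      have h : Continuous fun a : ℝ => (a - ⟪y - x, x⟫) / ‖y - x‖ ^ 2 :=
        (continuous_id.sub continuous_const).div_const _
      exact continuous_const.add
        ((continuous_const.max (continuous_const.min h)).smul continuous_const)
    have hPg : P x y = g ∘ innerSL ℝ (y - x) := by
      funext z
      simp only [hform x y hxy z, g, Function.comp, innerSL_apply_apply]
      rw [real_inner_comm, inner_sub_right]
    rw [hPg, ← induced_compose]
    exact induced_mono hg.le_induced
  · refine le_iInf fun f => ?_
    obtain ⟨v, rfl⟩ : ∃ v, innerSL ℝ v = f := (InnerProductSpace.toDual ℝ H).surjective f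
    have hvc : Continuous fun z : H => ⟪v, z⟫ := (innerSL ℝ v).continuous
    set τ : TopologicalSpace H := ⨅ (x : H) (y : H) (_ : x ≠ y),
        TopologicalSpace.induced (P x y) (inferInstance : TopologicalSpace H) with hτ
    rw [← continuous_iff_le_induced]
    rcases eq_or_ne v 0 with rfl | hv
    · have h0 : (⇑(innerSL ℝ (0 : H)) : H → ℝ) = fun _ => 0 := by
        funext z; simp
      rw [h0]
      exact @continuous_const H ℝ τ _ 0
    rw [@continuous_iff_continuousAt H ℝ τ]
    intro z₀
    have hvn : 0 < ‖v‖ ^ 2 := by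
      have : 0 < ‖v‖ := norm_pos_iff.2 hv
      positivity
    have hsub : (z₀ + v) - (z₀ - v) = (2 : ℝ) • v := by rw [two_smul]; abel
    have hxy : z₀ - v ≠ z₀ + v := by
      intro h
      rw [h, sub_self] at hsub
      exact smul_ne_zero two_ne_zero hv hsub.symm
    have hPc : @Continuous H H τ UniformSpace.toTopologicalSpace (P (z₀ - v) (z₀ + v)) := by
      refine continuous_iff_le_induced.2 ?_
      exact (iInf_le _ (z₀ - v)).trans ((iInf_le _ (z₀ + v)).trans (iInf_le _ hxy))
    have hG : @Continuous H ℝ τ _ (fun z => ⟪v, P (z₀ - v) (z₀ + v) z⟫) :=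
      @Continuous.comp H H ℝ τ UniformSpace.toTopologicalSpace _ _ _
        hvc hPc
    have hGval : ∀ z, ⟪v, P (z₀ - v) (z₀ + v) z⟫ = ⟪v, z₀⟫ - ‖v‖ ^ 2
        + 2 * ‖v‖ ^ 2 * max 0 (min 1 (1 / 2 + (⟪v, z⟫ - ⟪v, z₀⟫) / (2 * ‖v‖ ^ 2))) := by
      intro z
      have ha : ⟪z - (z₀ - v), (z₀ + v) - (z₀ - v)⟫ / ‖(z₀ + v) - (z₀ - v)‖ ^ 2
          = 1 / 2 + (⟪v, z⟫ - ⟪v, z₀⟫) / (2 * ‖v‖ ^ 2) := by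
        rw [hsub, norm_smul, inner_smul_right, real_inner_comm, inner_sub_right, inner_sub_right,
          real_inner_self_eq_norm_sq, mul_pow, Real.norm_eq_abs, sq_abs]
        field_simp
        ring
      rw [hform _ _ hxy, ha, hsub, inner_add_right, inner_sub_right, inner_smul_right,
        inner_smul_right, real_inner_self_eq_norm_sq]
      ring
    have hG0 : ⟪v, P (z₀ - v) (z₀ + v) z₀⟫ = ⟪v, z₀⟫ := by
      rw [hGval]
      norm_num
      ring
    -- The clamp is inactive at `z` as soon as `⟪v, P z⟫` lies strictly between its extreme values
    -- `⟪v, z₀⟫ - ‖v‖ ^ 2` and `⟪v, z₀⟫ + ‖v‖ ^ 2` on the segment.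
    have hloc : ∀ z, ⟪v, P (z₀ - v) (z₀ + v) z⟫ ∈
        Set.Ioo (⟪v, z₀⟫ - ‖v‖ ^ 2) (⟪v, z₀⟫ + ‖v‖ ^ 2) →
        ⟪v, P (z₀ - v) (z₀ + v) z⟫ = ⟪v, z⟫ := by
      rintro z ⟨h1, h2⟩
      rw [hGval] at h1 h2 ⊢
      set t := 1 / 2 + (⟪v, z⟫ - ⟪v, z₀⟫) / (2 * ‖v‖ ^ 2) with ht
      have ht' : 2 * ‖v‖ ^ 2 * t = ‖v‖ ^ 2 + (⟪v, z⟫ - ⟪v, z₀⟫) := by rw [ht]; field_simp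
      have hc0 : 0 < max 0 (min 1 t) := by
        by_contra! h
        nlinarith
      have hc1 : max 0 (min 1 t) < 1 := by
        by_contra! h
        nlinarith
      have ht0 : 0 < t := by
        by_contra! h
        rw [max_eq_left ((min_le_right _ _).trans h)] at hc0
        exact lt_irrefl _ hc0
      have ht1 : t < 1 := by
        by_contra! h
        rw [min_eq_left h, max_eq_right zero_le_one] at hc1
        exact lt_irrefl _ hc1
      rw [min_eq_right ht1.le, max_eq_right ht0.le, ht']
      ring
    have hGat := (@Continuous.continuousAt H ℝ τ _ _ z₀ hG)
    refine @ContinuousAt.congr H ℝ τ _ _ z₀ _ hGat ?_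
    have hnhds : Set.Ioo (⟪v, z₀⟫ - ‖v‖ ^ 2) (⟪v, z₀⟫ + ‖v‖ ^ 2) ∈
        nhds ⟪v, P (z₀ - v) (z₀ + v) z₀⟫ := by
      rw [hG0]
      exact Ioo_mem_nhds (by linarith) (by linarith)
    exact Filter.mem_of_superset (hGat hnhds) fun z hz => hloc z hz
end

section
/- Let H be a separable real Hilbert space and let K ⊆ H. Then K is compact in the weak topology if and only if K is sequentially compact in the weak topology (every sequence in K has a subsequence converging in the weak topology to a point of K). -/
/-!
The Riesz map identifies `H` with its weak topology and the dual of `H` with its weak-* topology,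
so it suffices to treat a subset of `WeakDual ℝ H`. The evaluations of a compact, or sequentially
compact, set are compact subsets of `ℝ`, hence by Banach–Steinhaus the set lies in a closed ball
for the dual norm. That ball is weak-* compact (Banach–Alaoglu) and, as `H` is separable,
metrizable. In a metrizable space compactness and sequential compactness agree.
-/

open RealInnerProductSpace

/-- The Riesz map `x ↦ ⟪x, ·⟫`, from the weak topology to the weak-* topology, is inducing. -/
lemma isInducing_riesz (H : Type*) [NormedAddCommGroup H] [InnerProductSpace ℝ H]
    [CompleteSpace H] :
    Topology.IsInducing (X := WeakSpace ℝ H) (Y := WeakDual ℝ H)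
      (fun x => StrongDual.toWeakDual
        (InnerProductSpace.toDual ℝ H ((toWeakSpace ℝ H).symm x))) := by
  set R : WeakSpace ℝ H → WeakDual ℝ H := fun x => StrongDual.toWeakDual
    (InnerProductSpace.toDual ℝ H ((toWeakSpace ℝ H).symm x)) with hR
  refine ⟨le_antisymm ?_ ?_⟩
  · refine continuous_iff_le_induced.1 (WeakDual.continuous_of_continuous_eval fun y => ?_)
    have h := WeakBilin.eval_continuous (topDualPairing ℝ H).flip (InnerProductSpace.toDual ℝ H y)
    refine h.congr fun x => ?_
    exact real_inner_comm ((toWeakSpace ℝ H).symm x) y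
  · refine (@continuous_iff_le_induced _ _ _ (TopologicalSpace.induced R inferInstance) _).1
      ((@continuous_pi_iff _ _ _ (TopologicalSpace.induced R inferInstance) _ _).2 fun l => ?_)
    -- By Riesz, the functional `l` is `⟪y, ·⟫` for some `y`.
    have h : @Continuous _ ℝ (TopologicalSpace.induced R inferInstance) _ fun x =>
        R x ((InnerProductSpace.toDual ℝ H).symm l) :=
      @Continuous.comp _ _ _ (TopologicalSpace.induced R inferInstance) _ _ _ _
        (WeakDual.eval_continuous _) continuous_induced_dom
    convert h using 2 with x
    rw [hR, StrongDual.toWeakDual_apply, InnerProductSpace.toDual_apply_apply, real_inner_comm,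
      InnerProductSpace.toDual_symm_apply]
    rfl

/-- Uniform boundedness: a set of functionals whose evaluations are all compact lies in a closed
ball for the dual norm. -/
lemma exists_subset_closedBall_of_isCompact_eval {E : Type*} [NormedAddCommGroup E]
    [NormedSpace ℝ E] [CompleteSpace E] {A : Set (WeakDual ℝ E)}
    (hA : ∀ x : E, IsCompact ((fun f : WeakDual ℝ E => f x) '' A)) :
    ∃ r, A ⊆ WeakDual.toStrongDual ⁻¹' Metric.closedBall (0 : StrongDual ℝ E) r := by
  obtain ⟨C, hC⟩ := banach_steinhaus (g := fun i : A => WeakDual.toStrongDual i.1) fun x => by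
    obtain ⟨M, hM⟩ := (hA x).isBounded.exists_norm_le
    exact ⟨M, fun i => hM _ ⟨i.1, i.2, rfl⟩⟩
  exact ⟨C, fun f hf => by simpa using hC ⟨f, hf⟩⟩

/-- A bounded set of the weak dual of a separable space lies in a compact metrizable ball, where
the two notions of compactness agree. -/
lemma isCompact_iff_isSeqCompact_of_subset_closedBall {E : Type*} [NormedAddCommGroup E]
    [NormedSpace ℝ E] [TopologicalSpace.SeparableSpace E] {A : Set (WeakDual ℝ E)} {r : ℝ}
    (hA : A ⊆ WeakDual.toStrongDual ⁻¹' Metric.closedBall (0 : StrongDual ℝ E) r) :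
    IsCompact A ↔ IsSeqCompact A := by
  set B : Set (WeakDual ℝ E) :=
    WeakDual.toStrongDual ⁻¹' Metric.closedBall (0 : StrongDual ℝ E) r
  have hB : TopologicalSpace.MetrizableSpace B :=
    WeakDual.metrizable_of_isCompact ℝ E B (WeakDual.isCompact_closedBall 0 r)
  let : MetricSpace B := TopologicalSpace.metrizableSpaceMetric B
  have hAB : ((↑) : B → WeakDual ℝ E) '' ((↑) ⁻¹' A) = A := by
    simpa using hA
  rw [← hAB, ← Subtype.isCompact_iff, ← Subtype.isSeqCompact_iff]
  exact isCompact_iff_isSeqCompact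

theorem stmt_16 {H : Type*} [NormedAddCommGroup H] [InnerProductSpace ℝ H] [CompleteSpace H]
    [TopologicalSpace.SeparableSpace H] (K : Set H) :
    @IsCompact H (weakTop H) K ↔ @IsSeqCompact H (weakTop H) K := by
  have key (A : Set (WeakSpace ℝ H)) : IsCompact A ↔ IsSeqCompact A := by
    have hR := isInducing_riesz H
    rw [hR.isCompact_iff, hR.isSeqCompact_iff]
    constructor
    · intro h
      obtain ⟨r, hr⟩ := exists_subset_closedBall_of_isCompact_eval fun x =>
        h.image (WeakDual.eval_continuous x)
      exact (isCompact_iff_isSeqCompact_of_subset_closedBall hr).1 h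
    · intro h
      obtain ⟨r, hr⟩ := exists_subset_closedBall_of_isCompact_eval fun x =>
        (h.image (WeakDual.eval_continuous x).seqContinuous).isCompact
      exact (isCompact_iff_isSeqCompact_of_subset_closedBall hr).2 h
  exact key K
end
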